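/- Let S be a unital inverse semigroup, f, g ∈ ℓ¹(S) and ξ ∈ ℓ²(S). Define (λ̃_r(f)ξ)(x) = ∑_{y : y y⋆ = x x⋆} f(y) · ξ(y⋆ x) and (ρ̃_r(g)ξ)(x) = ∑_{u : u u⋆ = x⋆ x} g(u) · ξ(x u); these again define square-summable functions. Then the operators commute: λ̃_r(f)(ρ̃_r(g)ξ) = ρ̃_r(g)(λ̃_r(f)ξ), both being equal at each x ∈ S to ∑_{y : y y⋆ = x x⋆} ∑_{u : u u⋆ = x⋆ x} f(y) · g(u) · ξ(y⋆ x u). (Lemma 2.5) -/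

import Mathlib

open scoped Classical ComplexOrder

noncomputable section

/-- A unital inverse semigroup: a monoid with an involution `star` satisfying
`star (x*y) = star y * star x`, `star (star x) = x`, `x * star x * x = x`,
`star x * x * star x = star x`, in which all idempotents commute. -/
class InverseSemigroup (S : Type*) extends Monoid S, StarMul S where
  mul_star_mul_self : ∀ x : S, x * star x * x = x
  star_mul_self_star : ∀ x : S, star x * x * star x = star x
  idem_comm : ∀ e f : S, e * e = e → f * f = f → e * f = f * e

variable {S : Type*} [InverseSemigroup S]

/-- The restricted left translate `λ_r(x)u`. -/
def restrictedTranslate (x : S) (u : S → ℂ) : S → ℂ := fun y =>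
  if x * star x = y * star y then u (star x * y) else 0

/-- `u` is restricted positive definite. -/
def IsRestrictedPosDef (u : S → ℂ) : Prop :=
  (∃ M : ℝ, ∀ x, ‖u x‖ ≤ M) ∧
  ∀ (n : ℕ) (x : Fin n → S) (c : Fin n → ℂ),
    0 ≤ ∑ i, ∑ j, (starRingEnd ℂ) (c i) * c j * restrictedTranslate (x i) u (x j)

/-- `u` is extendible restricted positive definite. -/
def IsExtendibleRPD (u : S → ℂ) : Prop :=
  IsRestrictedPosDef u ∧ (∀ x, u (star x) = (starRingEnd ℂ) (u x)) ∧
  ∃ C : ℝ, 0 < C ∧ ∀ (n : ℕ) (x : Fin n → S) (c : Fin n → ℂ),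
    ((‖∑ i, c i * u (x i)‖ ^ 2 : ℝ) : ℂ) ≤
      (C : ℂ) * ∑ i, ∑ j, (starRingEnd ℂ) (c i) * c j * restrictedTranslate (x i) u (x j)

/-- The restricted convolution `ξ • η`. -/
def rconv (ξ η : S → ℂ) : S → ℂ := fun x =>
  ∑' y, if star x * x = y * star y then ξ (x * y) * η (star y) else 0

/-- `ξ̃(x) = conj (ξ (star x))`. -/
def tilde (ξ : S → ℂ) : S → ℂ := fun x => (starRingEnd ℂ) (ξ (star x))

/-- Multiplication of the restricted semigroup `S_r = Option S`. -/
def rmul : Option S → Option S → Option S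
  | some x, some y => if star x * x = y * star y then some (x * y) else none
  | _, _ => none

/-- Involution of the restricted semigroup `S_r = Option S`. -/
def rstar : Option S → Option S
  | some x => some (star x)
  | none => none


/-- The operator `λ̃_r(f)`, `(λ̃_r(f)ξ)(x) = ∑_{y : y y⋆ = x x⋆} f(y) ξ(y⋆ x)`. -/
def lamTilde (f ξ : S → ℂ) : S → ℂ := fun x =>
  ∑' y : S, if y * star y = x * star x then f y * ξ (star y * x) else 0

/-- The operator `ρ̃_r(g)`, `(ρ̃_r(g)ξ)(x) = ∑_{u : u u⋆ = x⋆ x} g(u) ξ(x u)`. -/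
def rhoTilde (g ξ : S → ℂ) : S → ℂ := fun x =>
  ∑' u : S, if u * star u = star x * x then g u * ξ (x * u) else 0

open scoped ENNReal

/-! The map `x ↦ y⋆ x` is injective on `{x | y y⋆ = x x⋆}`, with left inverse `z ↦ y z`, so
`λ̃_r(f)` is an absolutely convergent combination of contractions of `ℓᵖ`; likewise for `ρ̃_r(g)`.
Since `x ↦ y⋆ x` leaves `x⋆ x` unchanged and `x ↦ x u` leaves `x x⋆` unchanged on these domains,
the two composites sum one absolutely convergent double series in the two possible orders. -/

namespace InverseSemigroup

theorem star_mul_self_star_mul_of_mul_star_eq {x y : S} (h : y * star y = x * star x) :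
    star (star y * x) * (star y * x) = star x * x := by
  calc star (star y * x) * (star y * x) = star x * (y * star y) * x := by
        simp only [star_mul, star_star, mul_assoc]
    _ = star x * x := by rw [h, ← mul_assoc, star_mul_self_star]

theorem mul_star_self_mul_of_mul_star_eq {x u : S} (h : u * star u = star x * x) :
    x * u * star (x * u) = x * star x := by
  calc x * u * star (x * u) = x * (u * star u) * star x := by
        simp only [star_mul, mul_assoc]
    _ = x * star x := by rw [h, ← mul_assoc, mul_star_mul_self]

theorem injOn_star_mul (y : S) :
    Set.InjOn (star y * ·) {x | y * star y = x * star x} := by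
  refine Set.LeftInvOn.injOn (f₁' := (y * ·)) fun x (hx : y * star y = x * star x) => ?_
  calc y * (star y * x) = x * star x * x := by rw [← mul_assoc, hx]
    _ = x := mul_star_mul_self x

theorem injOn_mul_right (u : S) :
    Set.InjOn (· * u) {x | u * star u = star x * x} := by
  refine Set.LeftInvOn.injOn (f₁' := (· * star u)) fun x (hx : u * star u = star x * x) => ?_
  calc x * u * star u = x * star x * x := by rw [mul_assoc, hx, mul_assoc]
    _ = x := mul_star_mul_self x

end InverseSemigroup

theorem summable_norm_of_memℓp_one {ι : Type*} {E : ι → Type*} [∀ i, NormedAddCommGroup (E i)]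
    {f : ∀ i, E i} (hf : Memℓp f 1) : Summable (‖f ·‖) := by
  simpa using hf.summable (by simp)

section PartialInjection

variable {ι α β E : Type*} {s : Set α} {φ : α → β}

theorem tsum_indicator_comp_le_of_injOn {F : β → ℝ} (hF : Summable F) (hF₀ : ∀ z, 0 ≤ F z)
    (hφ : s.InjOn φ) : ∑' x, s.indicator (F ∘ φ) x ≤ ∑' z, F z := by
  rw [← tsum_subtype]
  exact tsum_comp_le_tsum_of_inj hF hF₀ hφ.injective

variable [NormedAddCommGroup E] {p : ℝ≥0∞}

theorem norm_indicator_rpow {r : ℝ} (hr : r ≠ 0) (s : Set α) (u : α → E) :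
    (fun x => ‖s.indicator u x‖ ^ r) = s.indicator fun x => ‖u x‖ ^ r :=
  (Set.indicator_comp_of_zero (g := fun e : E => ‖e‖ ^ r) (by simp [hr])).symm

theorem memℓp_indicator_comp_of_injOn (hφ : s.InjOn φ) {ξ : β → E} (hξ : Memℓp ξ p) :
    Memℓp (s.indicator (ξ ∘ φ)) p := by
  rcases p.trichotomy with rfl | rfl | hp
  · refine memℓp_zero (Set.Finite.of_finite_image (f := φ) (hξ.finite_dsupport.subset ?_) ?_)
    · rintro _ ⟨x, hx, rfl⟩
      exact (Set.indicator_apply_ne_zero.1 hx).2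
    · exact hφ.mono fun x hx => Set.mem_of_indicator_ne_zero hx
  · obtain ⟨C, hC⟩ := hξ.bddAbove
    refine memℓp_infty ⟨C, Set.forall_mem_range.2 fun x => ?_⟩
    exact (norm_indicator_le_norm_self _ _).trans (hC ⟨φ x, rfl⟩)
  · refine memℓp_gen ?_
    rw [norm_indicator_rpow hp.ne']
    exact summable_subtype_iff_indicator.1 ((hξ.summable hp).comp_injective hφ.injective)

/-- Composition with the partial map `φ` of domain `s`, injective there, extended by zero off
`s`: the operator on `ℓᵖ` induced by a partial injection. -/
def lpIndicatorComp (hφ : s.InjOn φ) (ξ : lp (fun _ : β => E) p) : lp (fun _ : α => E) p :=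
  ⟨s.indicator (ξ ∘ φ), memℓp_indicator_comp_of_injOn hφ (lp.memℓp ξ)⟩

theorem norm_lpIndicatorComp_le (hp : p ≠ 0) (hφ : s.InjOn φ) (ξ : lp (fun _ : β => E) p) :
    ‖lpIndicatorComp hφ ξ‖ ≤ ‖ξ‖ := by
  rcases p.trichotomy with rfl | rfl | hp'
  · exact absurd rfl hp
  · exact lp.norm_le_of_forall_le (norm_nonneg ξ) fun x =>
      (norm_indicator_le_norm_self _ _).trans (lp.norm_apply_le_norm hp ξ (φ x))
  · refine lp.norm_le_of_tsum_le hp' (lp.norm_nonneg' ξ) ?_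
    calc ∑' x, ‖lpIndicatorComp hφ ξ x‖ ^ p.toReal
        = ∑' x, s.indicator ((fun z => ‖ξ z‖ ^ p.toReal) ∘ φ) x :=
          congrArg tsum (norm_indicator_rpow hp'.ne' s (ξ ∘ φ))
      _ ≤ ∑' z, ‖ξ z‖ ^ p.toReal :=
          tsum_indicator_comp_le_of_injOn ((lp.memℓp ξ).summable hp') (fun _ => by positivity) hφ
      _ = ‖ξ‖ ^ p.toReal := (lp.norm_rpow_eq_tsum hp' ξ).symm

theorem memℓp_tsum_smul_indicator_comp {𝕜 : Type*} [NormedRing 𝕜] [Module 𝕜 E]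
    [IsBoundedSMul 𝕜 E] [CompleteSpace E] [Fact (1 ≤ p)] {s : ι → Set α} {φ : ι → α → β}
    (hφ : ∀ i, (s i).InjOn (φ i)) {f : ι → 𝕜} (hf : Memℓp f 1) {ξ : β → E}
    (hξ : Memℓp ξ p) : Memℓp (fun x => ∑' i, f i • (s i).indicator (ξ ∘ φ i) x) p := by
  let ξ' : lp (fun _ : β => E) p := ⟨ξ, hξ⟩
  have hp : p ≠ 0 := (one_pos.trans_le Fact.out).ne'
  have summable_smul : Summable fun i => f i • lpIndicatorComp (hφ i) ξ' := by
    refine ((summable_norm_of_memℓp_one hf).mul_right ‖ξ'‖).of_norm_bounded fun i => ?_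
    calc ‖f i • lpIndicatorComp (hφ i) ξ'‖ ≤ ‖f i‖ * ‖lpIndicatorComp (hφ i) ξ'‖ :=
          norm_smul_le _ _
      _ ≤ ‖f i‖ * ‖ξ'‖ := by gcongr; exact norm_lpIndicatorComp_le hp (hφ i) ξ'
  convert lp.memℓp (∑' i, f i • lpIndicatorComp (hφ i) ξ') using 1
  ext x
  exact ((lp.evalCLM 𝕜 (fun _ : α => E) p x).map_tsum summable_smul).symm

end PartialInjection

theorem summable_mul_mul_of_norm_le {ι κ R : Type*} [NormedRing R] [CompleteSpace R]
    {f : ι → R} {g : κ → R} (hf : Memℓp f 1) (hg : Memℓp g 1)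
    {c : ι × κ → R} {M : ℝ} (hc : ∀ z, ‖c z‖ ≤ M) :
    Summable fun z : ι × κ => f z.1 * g z.2 * c z := by
  have summable_norm_mul : Summable fun z : ι × κ => ‖f z.1 * g z.2‖ :=
    (summable_norm_of_memℓp_one hf).mul_norm (summable_norm_of_memℓp_one hg)
  refine (summable_norm_mul.mul_right M).of_norm_bounded fun z => ?_
  calc ‖f z.1 * g z.2 * c z‖ ≤ ‖f z.1 * g z.2‖ * ‖c z‖ := norm_mul_le _ _
    _ ≤ ‖f z.1 * g z.2‖ * M := by gcongr; exact hc z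

section RestrictedOperators

variable {f g ξ : S → ℂ}

theorem lamTilde_eq_tsum_smul_indicator (f ξ : S → ℂ) :
    lamTilde f ξ = fun x =>
      ∑' y, f y • {x | y * star y = x * star x}.indicator (ξ ∘ (star y * ·)) x := by
  funext x
  simp [lamTilde, Set.indicator_apply]

theorem rhoTilde_eq_tsum_smul_indicator (g ξ : S → ℂ) :
    rhoTilde g ξ = fun x =>
      ∑' u, g u • {x | u * star u = star x * x}.indicator (ξ ∘ (· * u)) x := by
  funext x
  simp [rhoTilde, Set.indicator_apply]

theorem memℓp_lamTilde {p : ℝ≥0∞} [Fact (1 ≤ p)] (hf : Memℓp f 1) (hξ : Memℓp ξ p) :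
    Memℓp (lamTilde f ξ) p := by
  rw [lamTilde_eq_tsum_smul_indicator]
  exact memℓp_tsum_smul_indicator_comp InverseSemigroup.injOn_star_mul hf hξ

theorem memℓp_rhoTilde {p : ℝ≥0∞} [Fact (1 ≤ p)] (hg : Memℓp g 1) (hξ : Memℓp ξ p) :
    Memℓp (rhoTilde g ξ) p := by
  rw [rhoTilde_eq_tsum_smul_indicator]
  exact memℓp_tsum_smul_indicator_comp InverseSemigroup.injOn_mul_right hg hξ

theorem lamTilde_rhoTilde_apply (f g ξ : S → ℂ) (x : S) :
    lamTilde f (rhoTilde g ξ) x =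
      ∑' y : S, ∑' u : S,
        if y * star y = x * star x then
          (if u * star u = star x * x then f y * g u * ξ (star y * x * u) else 0)
        else 0 := by
  refine tsum_congr fun y => ?_
  split_ifs with hy
  · rw [rhoTilde, InverseSemigroup.star_mul_self_star_mul_of_mul_star_eq hy, ← tsum_mul_left]
    simp only [mul_ite, mul_zero, mul_assoc]
  · exact tsum_zero.symm

theorem rhoTilde_lamTilde_apply (f g ξ : S → ℂ) (x : S) :
    rhoTilde g (lamTilde f ξ) x =
      ∑' u : S, ∑' y : S,
        if y * star y = x * star x then
          (if u * star u = star x * x then f y * g u * ξ (star y * x * u) else 0)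
        else 0 := by
  refine tsum_congr fun u => ?_
  split_ifs with hu
  · rw [lamTilde, InverseSemigroup.mul_star_self_mul_of_mul_star_eq hu, ← tsum_mul_left]
    simp only [mul_ite, mul_zero, mul_assoc, mul_left_comm (g u)]
  · simp only [ite_self, tsum_zero]

theorem summable_restricted_double_series (hf : Memℓp f 1) (hg : Memℓp g 1) (hξ : Memℓp ξ ∞)
    (x : S) :
    Summable (Function.uncurry fun y u : S =>
      if y * star y = x * star x then
        (if u * star u = star x * x then f y * g u * ξ (star y * x * u) else 0)
      else 0) := by
  obtain ⟨M, hM⟩ := hξ.bddAbove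
  have summable_unrestricted :
      Summable fun z : S × S => f z.1 * g z.2 * ξ (star z.1 * x * z.2) :=
    summable_mul_mul_of_norm_le hf hg fun z => hM ⟨star z.1 * x * z.2, rfl⟩
  refine (summable_unrestricted.indicator
    {z | z.1 * star z.1 = x * star x ∧ z.2 * star z.2 = star x * x}).congr fun z => ?_
  simp [Function.uncurry, Set.indicator_apply, ite_and]

theorem lamTilde_rhoTilde_comm_of_bounded (hf : Memℓp f 1) (hg : Memℓp g 1) (hξ : Memℓp ξ ∞) :
    lamTilde f (rhoTilde g ξ) = rhoTilde g (lamTilde f ξ) := by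
  funext x
  rw [lamTilde_rhoTilde_apply, rhoTilde_lamTilde_apply]
  exact (summable_restricted_double_series hf hg hξ x).tsum_comm.symm

end RestrictedOperators

theorem lamTilde_rhoTilde_comm_general {S : Type*} [InverseSemigroup S] {p : ℝ≥0∞}
    [Fact (1 ≤ p)] (f g ξ : S → ℂ) (hf : Memℓp f 1) (hg : Memℓp g 1) (hξ : Memℓp ξ p) :
    Memℓp (lamTilde f ξ) p ∧ Memℓp (rhoTilde g ξ) p ∧
    ∀ x : S, lamTilde f (rhoTilde g ξ) x = rhoTilde g (lamTilde f ξ) x ∧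
      lamTilde f (rhoTilde g ξ) x =
        ∑' y : S, ∑' u : S,
          if y * star y = x * star x then
            (if u * star u = star x * x then f y * g u * ξ (star y * x * u) else 0)
          else 0 :=
  ⟨memℓp_lamTilde hf hξ, memℓp_rhoTilde hg hξ, fun x =>
    ⟨congrFun (lamTilde_rhoTilde_comm_of_bounded hf hg (hξ.of_exponent_ge le_top)) x,
      lamTilde_rhoTilde_apply f g ξ x⟩⟩

/-- Lemma 2.5: for `f, g ∈ ℓ¹(S)` and `ξ ∈ ℓ²(S)`, `λ̃_r(f)` and `ρ̃_r(g)` yield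
square-summable functions and commute, both compositions being given by the double sum
`∑_{y : y y⋆ = x x⋆} ∑_{u : u u⋆ = x⋆ x} f(y) g(u) ξ(y⋆ x u)`. -/
theorem lamTilde_rhoTilde_comm {S : Type*} [InverseSemigroup S] (f g ξ : S → ℂ)
    (hf : Memℓp f 1) (hg : Memℓp g 1) (hξ : Memℓp ξ 2) :
    Memℓp (lamTilde f ξ) 2 ∧ Memℓp (rhoTilde g ξ) 2 ∧
    ∀ x : S, lamTilde f (rhoTilde g ξ) x = rhoTilde g (lamTilde f ξ) x ∧
      lamTilde f (rhoTilde g ξ) x =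
        ∑' y : S, ∑' u : S,
          if y * star y = x * star x then
            (if u * star u = star x * x then f y * g u * ξ (star y * x * u) else 0)
          else 0 :=
  lamTilde_rhoTilde_comm_general f g ξ hf hg hξ
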